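/- There exists a constant C > 0 such that for every integer N ≥ 1, every t ∈ [0,1], and every α ∈ [0,1]: 1/C ≤ q_t^N(α) ≤ C. -/

import Mathlib

open Set Filter

noncomputable def GP : ℝ → ℝ := fun x => x * Real.log x + (1 - x) * Real.log (1 - x)

noncomputable def Gt (f0 f1 : ℝ → ℝ) (t : ℝ) : ℝ → ℝ :=
  fun x => GP x + ((1 - t) * f0 x + t * f1 x)

noncomputable def Phase (G : ℝ → ℝ) (α : ℝ) : ℝ → ℝ :=
  fun x => (x - α) * deriv G x - (G x - G α)

noncomputable def Qnorm (G : ℝ → ℝ) (N : ℕ) (α : ℝ) : ℝ :=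
  2 * Real.pi * ∫ x in (0:ℝ)..1, Real.exp (-(N : ℝ) * Phase G α x)

noncomputable def RPhase (G : ℝ → ℝ) (α : ℝ) : ℝ → ℝ :=
  fun y => (1 / α) * Phase G α (α * (1 + y))

noncomputable def Leg (G : ℝ → ℝ) (S : Set ℝ) : ℝ → ℝ :=
  fun ρ => sSup ((fun x => x * ρ - G x) '' S)

noncomputable def QQ (G : ℝ → ℝ) (N : ℕ) (α : ℝ) : ℝ :=
  Qnorm G N α * Real.exp ((N : ℝ) * G α)

/-!
`Phase G α x` is the Bregman divergence `G α - G x - G' x (α - x)` of the potential `G`: it is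
linear in `G` and nonnegative when `G` is convex. Since `GP'' x = 1 / (x (1 - x))`, the ratio
`(GP + f)'' / GP'' = 1 + x (1 - x) f'' x` extends continuously to `[0, 1]` with value `1` at both
endpoints, so it is bounded above and away from `0`. Hence for some `K ≥ 1` the functions
`K • (GP + f) - GP` and `K • GP - (GP + f)` are convex for `f = f0` and `f = f1`, therefore for all
convex combinations, and the phases of `Gt f0 f1 t` and `GP` agree up to the factor `K`, uniformly
in `t`.

It remains to compare `∫ exp (-N F)` with `∫ exp (-K N F)` for `F = Phase GP α`. As `F` is convex
and vanishes at `α`, contracting `[0, 1]` towards `α` by `K⁻¹` divides `F` by at least `K`, and the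
change of variables costs a factor `K` independent of `N` and `α`.
-/

open MeasureTheory

theorem eventually_one_le_mul_and_le_of_isCompact {X : Type*} [TopologicalSpace X]
    {S : Set X} {u : X → ℝ} (hS : IsCompact S) (hu : ContinuousOn u S) (hpos : ∀ x ∈ S, 0 < u x) :
    ∀ᶠ K in atTop, ∀ x ∈ S, 1 ≤ K * u x ∧ u x ≤ K := by
  obtain ⟨A, hA⟩ := hS.bddAbove_image hu
  obtain ⟨B, hB⟩ := hS.bddAbove_image (hu.inv₀ fun x hx => (hpos x hx).ne')
  filter_upwards [eventually_ge_atTop A, eventually_ge_atTop B] with K hAK hBK x hx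
  exact ⟨(inv_le_iff_one_le_mul₀ (hpos x hx)).1 ((hB (mem_image_of_mem _ hx)).trans hBK),
    (hA (mem_image_of_mem _ hx)).trans hAK⟩

section LaplaceIntegral

variable {E F : ℝ → ℝ} {a b α K M : ℝ}

theorem intervalIntegrable_exp_neg_mul (hab : a ≤ b) (hM : 0 ≤ M)
    (hF : Measurable F) (hF0 : ∀ x ∈ Ioo a b, 0 ≤ F x) :
    IntervalIntegrable (fun x => Real.exp (-M * F x)) volume a b := by
  rw [intervalIntegrable_iff_integrableOn_Ioo_of_le hab]
  refine Measure.integrableOn_of_bounded (M := 1) (by simp)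
    (hF.const_mul (-M)).exp.aestronglyMeasurable ?_
  filter_upwards [ae_restrict_mem measurableSet_Ioo] with x hx
  rw [Real.norm_eq_abs, Real.abs_exp, Real.exp_le_one_iff, neg_mul]
  exact neg_nonpos.2 (mul_nonneg hM (hF0 x hx))

theorem integral_exp_neg_mul_mono {L : ℝ} (hab : a ≤ b) (hL : 0 ≤ L) (hM : 0 ≤ M)
    (hE : Measurable E) (hF : Measurable F) (hE0 : ∀ x ∈ Ioo a b, 0 ≤ E x)
    (hF0 : ∀ x ∈ Ioo a b, 0 ≤ F x) (h : ∀ x ∈ Ioo a b, M * F x ≤ L * E x) :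
    ∫ x in a..b, Real.exp (-L * E x) ≤ ∫ x in a..b, Real.exp (-M * F x) := by
  refine intervalIntegral.integral_mono_on_of_le_Ioo hab
    (intervalIntegrable_exp_neg_mul hab hL hE hE0) (intervalIntegrable_exp_neg_mul hab hM hF hF0)
    fun x hx => Real.exp_le_exp.2 ?_
  simpa only [neg_mul, neg_le_neg_iff] using h x hx

theorem combo_mem_Ioo {x s : ℝ} (hα : α ∈ Icc a b) (hx : x ∈ Ioo a b)
    (hs : s ∈ Ioc (0 : ℝ) 1) : (1 - s) * α + s * x ∈ Ioo a b := by
  rw [← interior_Icc] at hx ⊢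
  exact (convex_Icc a b).combo_self_interior_mem_interior hα hx (sub_nonneg.2 hs.2) hs.1
    (sub_add_cancel 1 s)

theorem mul_integral_comp_combo_le {f : ℝ → ℝ} {s : ℝ} (hα : α ∈ Icc a b)
    (hs : s ∈ Icc (0 : ℝ) 1) (hf : IntervalIntegrable f volume a b) (hf0 : ∀ x, 0 ≤ f x) :
    s * ∫ x in a..b, f ((1 - s) * α + s * x) ≤ ∫ x in a..b, f x := by
  rw [← smul_eq_mul, intervalIntegral.smul_integral_comp_add_mul f s]
  have left_le : (1 - s) * a ≤ (1 - s) * α := mul_le_mul_of_nonneg_left hα.1 (sub_nonneg.2 hs.2)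
  have le_right : (1 - s) * α ≤ (1 - s) * b := mul_le_mul_of_nonneg_left hα.2 (sub_nonneg.2 hs.2)
  have hsab : s * a ≤ s * b := mul_le_mul_of_nonneg_left (hα.1.trans hα.2) hs.1
  exact intervalIntegral.integral_mono_interval (by linarith) (by linarith) (by linarith)
    (Eventually.of_forall hf0) hf

theorem integral_exp_neg_mul_le_mul_integral (hα : α ∈ Icc a b) (hK : 1 ≤ K) (hM : 0 ≤ M)
    (hF : Measurable F) (hF0 : ∀ x ∈ Ioo a b, 0 ≤ F x)
    (hstar : ∀ x ∈ Ioo a b, F ((1 - K⁻¹) * α + K⁻¹ * x) ≤ K⁻¹ * F x) :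
    ∫ x in a..b, Real.exp (-M * F x) ≤ K * ∫ x in a..b, Real.exp (-(K * M) * F x) := by
  have hab : a ≤ b := hα.1.trans hα.2
  have hK0 : 0 < K := one_pos.trans_le hK
  have hs : K⁻¹ ∈ Ioc (0 : ℝ) 1 := ⟨inv_pos.2 hK0, inv_le_one_of_one_le₀ hK⟩
  have hKM : 0 ≤ K * M := mul_nonneg hK0.le hM
  rw [← inv_mul_le_iff₀ hK0]
  calc K⁻¹ * ∫ x in a..b, Real.exp (-M * F x)
      ≤ K⁻¹ * ∫ x in a..b, Real.exp (-(K * M) * F ((1 - K⁻¹) * α + K⁻¹ * x)) := by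
        refine mul_le_mul_of_nonneg_left ?_ hs.1.le
        refine integral_exp_neg_mul_mono hab hM hKM hF (by fun_prop) hF0
          (fun x hx => hF0 _ (combo_mem_Ioo hα hx hs)) fun x hx => ?_
        calc K * M * F ((1 - K⁻¹) * α + K⁻¹ * x) ≤ K * M * (K⁻¹ * F x) :=
              mul_le_mul_of_nonneg_left (hstar x hx) hKM
          _ = M * F x := by field_simp
    _ ≤ ∫ x in a..b, Real.exp (-(K * M) * F x) :=
        mul_integral_comp_combo_le (f := fun y => Real.exp (-(K * M) * F y)) hα
          (Ioc_subset_Icc_self hs) (intervalIntegrable_exp_neg_mul hab hKM hF hF0)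
          fun _ => (Real.exp_pos _).le

theorem integral_exp_neg_mul_comparison (hα : α ∈ Icc a b) (hK : 1 ≤ K) (hM : 0 ≤ M)
    (hE : Measurable E) (hF : Measurable F) (hF0 : ∀ x ∈ Ioo a b, 0 ≤ F x)
    (hstar : ∀ x ∈ Ioo a b, F ((1 - K⁻¹) * α + K⁻¹ * x) ≤ K⁻¹ * F x)
    (hEF : ∀ x ∈ Ioo a b, E x ≤ K * F x) (hFE : ∀ x ∈ Ioo a b, F x ≤ K * E x) :
    ∫ x in a..b, Real.exp (-M * F x) ≤ K * ∫ x in a..b, Real.exp (-M * E x) ∧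
      ∫ x in a..b, Real.exp (-M * E x) ≤ K * ∫ x in a..b, Real.exp (-M * F x) := by
  have hab : a ≤ b := hα.1.trans hα.2
  have hK0 : 0 < K := one_pos.trans_le hK
  have hE0 : ∀ x ∈ Ioo a b, 0 ≤ E x := fun x hx =>
    nonneg_of_mul_nonneg_right ((hF0 x hx).trans (hFE x hx)) hK0
  have hMK : 0 ≤ M / K := div_nonneg hM hK0.le
  constructor
  · refine (integral_exp_neg_mul_le_mul_integral hα hK hM hF hF0 hstar).trans
      (mul_le_mul_of_nonneg_left ?_ hK0.le)
    refine integral_exp_neg_mul_mono hab (mul_nonneg hK0.le hM) hM hF hE hF0 hE0 fun x hx => ?_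
    linarith [mul_le_mul_of_nonneg_left (hEF x hx) hM]
  · calc ∫ x in a..b, Real.exp (-M * E x) ≤ ∫ x in a..b, Real.exp (-(M / K) * F x) := by
          refine integral_exp_neg_mul_mono hab hM hMK hE hF hE0 hF0 fun x hx => ?_
          calc M / K * F x ≤ M / K * (K * E x) := mul_le_mul_of_nonneg_left (hFE x hx) hMK
            _ = M * E x := by field_simp
      _ ≤ K * ∫ x in a..b, Real.exp (-(K * (M / K)) * F x) :=
          integral_exp_neg_mul_le_mul_integral hα hK hMK hF hF0 hstar
      _ = K * ∫ x in a..b, Real.exp (-M * F x) := by rw [mul_div_cancel₀ M hK0.ne']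

end LaplaceIntegral

section Phase

variable {S : Set ℝ} {G H : ℝ → ℝ} {α x : ℝ}

theorem measurable_phase (hG : Measurable G) (α : ℝ) : Measurable (Phase G α) :=
  ((measurable_id.sub_const α).mul (measurable_deriv G)).sub (hG.sub_const _)

theorem phase_nonneg (hG : ConvexOn ℝ S G) (hα : α ∈ S) (hx : x ∈ S)
    (hd : DifferentiableAt ℝ G x) : 0 ≤ Phase G α x := by
  unfold Phase
  rcases lt_trichotomy α x with h | rfl | h
  · have hslope := hG.slope_le_deriv hα hx h hd
    rw [slope_def_field, div_le_iff₀ (sub_pos.2 h)] at hslope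
    linarith
  · simp
  · have hslope := hG.deriv_le_slope hx hα h hd
    rw [slope_def_field, le_div_iff₀ (sub_pos.2 h)] at hslope
    linarith

theorem phase_const_smul_sub (c : ℝ) (hG : DifferentiableAt ℝ G x) (hH : DifferentiableAt ℝ H x) :
    Phase (c • G - H) α x = c * Phase G α x - Phase H α x := by
  simp only [Phase, deriv_sub (hG.const_smul c) hH, deriv_const_smul_field, Pi.sub_apply,
    Pi.smul_apply, smul_eq_mul]
  ring

end Phase

/-- The potentials `h` and `G` are convexly comparable on `S` with constant `K`. For `K > 0` and
`h`, `G` twice differentiable this means `K⁻¹ * h'' ≤ G'' ≤ K * h''`; encoding it by convexity of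
`K • G - h` and `K • h - G` lets `S` contain endpoints at which the second derivatives blow up. -/
structure ConvexComparable (S : Set ℝ) (K : ℝ) (h G : ℝ → ℝ) : Prop where
  convexOn_smul_sub_left : ConvexOn ℝ S (K • G - h)
  convexOn_smul_sub_right : ConvexOn ℝ S (K • h - G)

section ConvexComparable

variable {S : Set ℝ} {K : ℝ} {h G : ℝ → ℝ}

theorem convexOn_smul_sub_of_iteratedDeriv_le (hS : Convex ℝ S) (hh : ContinuousOn h S)
    (hG : ContinuousOn G S) (hh2 : ContDiffOn ℝ 2 h (interior S))
    (hG2 : ContDiffOn ℝ 2 G (interior S))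
    (hle : ∀ x ∈ interior S, iteratedDeriv 2 h x ≤ K * iteratedDeriv 2 G x) :
    ConvexOn ℝ S (K • G - h) := by
  have hsub : ContDiffOn ℝ 2 (K • G - h) (interior S) := (hG2.const_smul K).sub hh2
  refine convexOn_of_deriv2_nonneg hS ((hG.const_smul K).sub hh)
    (hsub.differentiableOn two_ne_zero)
    ((hsub.deriv_of_isOpen (m := 1) isOpen_interior le_rfl).differentiableOn one_ne_zero)
    fun x hx => ?_
  have hx' : interior S ∈ nhds x := isOpen_interior.mem_nhds hx
  have hKG : ContDiffAt ℝ 2 (K • G) x := (hG2.contDiffAt hx').const_smul K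
  rw [← iteratedDeriv_eq_iterate, iteratedDeriv_sub hKG (hh2.contDiffAt hx'),
    iteratedDeriv_const_smul_field, smul_eq_mul, sub_nonneg]
  exact hle x hx

theorem ConvexComparable.of_iteratedDeriv_le (hS : Convex ℝ S) (hh : ContinuousOn h S)
    (hG : ContinuousOn G S) (hh2 : ContDiffOn ℝ 2 h (interior S))
    (hG2 : ContDiffOn ℝ 2 G (interior S))
    (hhG : ∀ x ∈ interior S, iteratedDeriv 2 h x ≤ K * iteratedDeriv 2 G x)
    (hGh : ∀ x ∈ interior S, iteratedDeriv 2 G x ≤ K * iteratedDeriv 2 h x) :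
    ConvexComparable S K h G :=
  ⟨convexOn_smul_sub_of_iteratedDeriv_le hS hh hG hh2 hG2 hhG,
    convexOn_smul_sub_of_iteratedDeriv_le hS hG hh hG2 hh2 hGh⟩

theorem convex_setOf_convexComparable (S : Set ℝ) (K : ℝ) (h : ℝ → ℝ) :
    Convex ℝ {G | ConvexComparable S K h G} := by
  intro G₀ hG₀ G₁ hG₁ a b ha hb hab
  constructor
  · refine ((hG₀.convexOn_smul_sub_left.smul ha).add
      (hG₁.convexOn_smul_sub_left.smul hb)).congr fun x _ => ?_
    simp only [Pi.sub_apply, Pi.add_apply, Pi.smul_apply, smul_eq_mul]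
    linear_combination -h x * hab
  · refine ((hG₀.convexOn_smul_sub_right.smul ha).add
      (hG₁.convexOn_smul_sub_right.smul hb)).congr fun x _ => ?_
    simp only [Pi.sub_apply, Pi.add_apply, Pi.smul_apply, smul_eq_mul]
    linear_combination K * h x * hab

variable {α x : ℝ}

theorem ConvexComparable.phase_le (hG : ConvexComparable S K h G) (hα : α ∈ S) (hx : x ∈ S)
    (hdh : DifferentiableAt ℝ h x) (hdG : DifferentiableAt ℝ G x) :
    Phase G α x ≤ K * Phase h α x := by
  rw [← sub_nonneg, ← phase_const_smul_sub K hdh hdG]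
  exact phase_nonneg hG.convexOn_smul_sub_right hα hx ((hdh.const_smul K).sub hdG)

theorem ConvexComparable.symm (hG : ConvexComparable S K h G) : ConvexComparable S K G h :=
  ⟨hG.convexOn_smul_sub_right, hG.convexOn_smul_sub_left⟩

end ConvexComparable

section BinaryEntropy

theorem GP_eq_neg_binEntropy : GP = -Real.binEntropy := by
  ext x
  simp only [GP, Pi.neg_apply, Real.binEntropy, Real.log_inv]
  ring

theorem continuous_GP : Continuous GP :=
  GP_eq_neg_binEntropy ▸ Real.binEntropy_continuous.neg

theorem convexOn_GP : ConvexOn ℝ (Icc 0 1) GP :=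
  GP_eq_neg_binEntropy ▸ Real.strictConcave_binEntropy.concaveOn.neg

theorem contDiffOn_GP {n : WithTop ℕ∞} : ContDiffOn ℝ n GP (Ioo 0 1) := by
  have hlog : ContDiffOn ℝ n Real.log (Ioi 0) := fun x hx =>
    (Real.contDiffAt_log.2 (ne_of_gt hx)).contDiffWithinAt
  have hsub : ContDiffOn ℝ n (fun x : ℝ => 1 - x) (Ioo 0 1) := by fun_prop
  exact (contDiffOn_id.mul (hlog.mono fun x hx => hx.1)).add
    (hsub.mul (hlog.comp hsub fun x hx => sub_pos.2 hx.2))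

theorem differentiableAt_GP {x : ℝ} (hx : x ∈ Ioo (0 : ℝ) 1) : DifferentiableAt ℝ GP x :=
  (contDiffOn_GP.contDiffAt (isOpen_Ioo.mem_nhds hx)).differentiableAt one_ne_zero

theorem iteratedDeriv_two_GP (x : ℝ) : iteratedDeriv 2 GP x = 1 / (x * (1 - x)) := by
  rw [GP_eq_neg_binEntropy, iteratedDeriv_neg, iteratedDeriv_eq_iterate, Real.deriv2_binEntropy,
    neg_div, neg_neg]

theorem iteratedDeriv_two_GP_add {f : ℝ → ℝ} {x : ℝ} (hf : ContDiffAt ℝ 2 f x)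
    (hx : x ∈ Ioo (0 : ℝ) 1) :
    iteratedDeriv 2 (GP + f) x =
      (1 + x * (1 - x) * iteratedDeriv 2 f x) * iteratedDeriv 2 GP x := by
  have hx0 : x ≠ 0 := hx.1.ne'
  have hx1 : 1 - x ≠ 0 := (sub_pos.2 hx.2).ne'
  rw [iteratedDeriv_add (contDiffOn_GP.contDiffAt (isOpen_Ioo.mem_nhds hx)) hf,
    iteratedDeriv_two_GP]
  field_simp

theorem phase_GP (α x : ℝ) :
    Phase GP α x = GP α - α * Real.log x - (1 - α) * Real.log (1 - x) := by
  rw [Phase, GP_eq_neg_binEntropy, deriv.neg, Real.deriv_binEntropy]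
  simp only [Pi.neg_apply, Real.binEntropy, Real.log_inv]
  ring

theorem mul_log_combo_le {a x s : ℝ} (ha : 0 ≤ a) (hx : 0 < x) (hs : s ∈ Icc (0 : ℝ) 1) :
    a * ((1 - s) * Real.log a + s * Real.log x) ≤ a * Real.log ((1 - s) * a + s * x) := by
  rcases ha.eq_or_lt with rfl | ha
  · simp
  · exact mul_le_mul_of_nonneg_left (strictConcaveOn_log_Ioi.concaveOn.2 ha hx
      (sub_nonneg.2 hs.2) hs.1 (sub_add_cancel 1 s)) ha.le

/-- `Phase GP α x` is the Kullback-Leibler divergence between the Bernoulli laws with parameters `α`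
and `x`, which is convex in `x`. -/
theorem phase_GP_combo_le {α x s : ℝ} (hα : α ∈ Icc (0 : ℝ) 1) (hx : x ∈ Ioo (0 : ℝ) 1)
    (hs : s ∈ Icc (0 : ℝ) 1) : Phase GP α ((1 - s) * α + s * x) ≤ s * Phase GP α x := by
  have hlog := mul_log_combo_le hα.1 hx.1 hs
  have hlog' := mul_log_combo_le (sub_nonneg.2 hα.2) (sub_pos.2 hx.2) hs
  rw [show (1 - s) * (1 - α) + s * (1 - x) = 1 - ((1 - s) * α + s * x) by ring] at hlog'
  rw [phase_GP, phase_GP, GP]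
  linarith

end BinaryEntropy

theorem eventually_convexComparable_GP_add {f : ℝ → ℝ} (hf : ContDiff ℝ 2 f)
    (hpos : ∀ x ∈ Ioo (0 : ℝ) 1, 0 < iteratedDeriv 2 (GP + f) x) :
    ∀ᶠ K in atTop, ConvexComparable (Icc 0 1) K GP (GP + f) := by
  set u : ℝ → ℝ := fun x => 1 + x * (1 - x) * iteratedDeriv 2 f x with hu
  have hGP2 : ∀ x ∈ Ioo (0 : ℝ) 1, 0 < iteratedDeriv 2 GP x := fun x hx => by
    rw [iteratedDeriv_two_GP]
    exact one_div_pos.2 (mul_pos hx.1 (sub_pos.2 hx.2))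
  have hGf2 : ∀ x ∈ Ioo (0 : ℝ) 1, iteratedDeriv 2 (GP + f) x = u x * iteratedDeriv 2 GP x :=
    fun x hx => iteratedDeriv_two_GP_add hf.contDiffAt hx
  have hu_pos : ∀ x ∈ Icc (0 : ℝ) 1, 0 < u x := by
    intro x hx
    rcases eq_endpoints_or_mem_Ioo_of_mem_Icc hx with rfl | rfl | hx
    · simp [hu]
    · simp [hu]
    · exact pos_of_mul_pos_left (hGf2 x hx ▸ hpos x hx) (hGP2 x hx).le
  have hu_cont : Continuous u := by
    have := hf.continuous_iteratedDeriv' 2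
    fun_prop
  filter_upwards [eventually_one_le_mul_and_le_of_isCompact isCompact_Icc hu_cont.continuousOn
    hu_pos] with K hK
  refine .of_iteratedDeriv_le (convex_Icc 0 1) continuous_GP.continuousOn
    (continuous_GP.add hf.continuous).continuousOn ?_ ?_ ?_ ?_ <;> rw [interior_Icc]
  · exact contDiffOn_GP
  · exact contDiffOn_GP.add hf.contDiffOn
  · intro x hx
    rw [hGf2 x hx, ← mul_assoc]
    exact le_mul_of_one_le_left (hGP2 x hx).le (hK x (Ioo_subset_Icc_self hx)).1
  · intro x hx
    rw [hGf2 x hx]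
    exact mul_le_mul_of_nonneg_right (hK x (Ioo_subset_Icc_self hx)).2 (hGP2 x hx).le

theorem one_div_le_Qnorm_div_and_le {G : ℝ → ℝ} {K : ℝ} (hG : Measurable G)
    (hdG : DifferentiableOn ℝ G (Ioo 0 1)) (hK : 1 ≤ K)
    (hcomp : ConvexComparable (Icc 0 1) K GP G) (N : ℕ) {α : ℝ} (hα : α ∈ Icc (0 : ℝ) 1) :
    1 / K ≤ Qnorm G N α / Qnorm GP N α ∧ Qnorm G N α / Qnorm GP N α ≤ K := by
  have hK0 : 0 < K := one_pos.trans_le hK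
  have hs : K⁻¹ ∈ Icc (0 : ℝ) 1 := ⟨(inv_pos.2 hK0).le, inv_le_one_of_one_le₀ hK⟩
  have hmGP : Measurable (Phase GP α) := measurable_phase continuous_GP.measurable α
  have hIcc : Ioo (0 : ℝ) 1 ⊆ Icc 0 1 := Ioo_subset_Icc_self
  have hd : ∀ x ∈ Ioo (0 : ℝ) 1, DifferentiableAt ℝ G x := fun x hx =>
    hdG.differentiableAt (isOpen_Ioo.mem_nhds hx)
  have hnonneg : ∀ x ∈ Ioo (0 : ℝ) 1, 0 ≤ Phase GP α x := fun x hx =>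
    phase_nonneg convexOn_GP hα (hIcc hx) (differentiableAt_GP hx)
  obtain ⟨hlower, hupper⟩ := integral_exp_neg_mul_comparison (M := N) hα hK N.cast_nonneg
    (measurable_phase hG α) hmGP hnonneg (fun x hx => phase_GP_combo_le hα hx hs)
    (fun x hx => hcomp.phase_le hα (hIcc hx) (differentiableAt_GP hx) (hd x hx))
    (fun x hx => hcomp.symm.phase_le hα (hIcc hx) (hd x hx) (differentiableAt_GP hx))
  have hpos : 0 < ∫ x in (0 : ℝ)..1, Real.exp (-(N : ℝ) * Phase GP α x) :=
    intervalIntegral.intervalIntegral_pos_of_pos_on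
      (intervalIntegrable_exp_neg_mul zero_le_one N.cast_nonneg hmGP hnonneg)
      (fun _ _ => Real.exp_pos _) zero_lt_one
  rw [Qnorm, Qnorm, mul_div_mul_left _ _ Real.two_pi_pos.ne', le_div_iff₀ hpos,
    div_le_iff₀ hpos, one_div, inv_mul_le_iff₀ hK0]
  exact ⟨hlower, hupper⟩

theorem Gt_eq_combo (f0 f1 : ℝ → ℝ) (t : ℝ) :
    Gt f0 f1 t = (1 - t) • (GP + f0) + t • (GP + f1) := by
  ext x
  simp only [Gt, Pi.add_apply, Pi.smul_apply, smul_eq_mul]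
  ring

theorem bergman_cp1_uniform_bounds_on_q_general
    (f0 f1 : ℝ → ℝ) (hf0 : ContDiff ℝ 2 f0) (hf1 : ContDiff ℝ 2 f1)
    (hG0 : ∀ x ∈ Ioo (0 : ℝ) 1, 0 < iteratedDeriv 2 (Gt f0 f1 0) x)
    (hG1 : ∀ x ∈ Ioo (0 : ℝ) 1, 0 < iteratedDeriv 2 (Gt f0 f1 1) x) :
    ∃ C : ℝ, 0 < C ∧
      ∀ N : ℕ, ∀ t ∈ Icc (0 : ℝ) 1, ∀ α ∈ Icc (0 : ℝ) 1,
        1 / C ≤ Qnorm (Gt f0 f1 t) N α / Qnorm GP N α ∧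
        Qnorm (Gt f0 f1 t) N α / Qnorm GP N α ≤ C := by
  simp only [Gt_eq_combo, sub_zero, sub_self, one_smul, zero_smul, add_zero, zero_add]
    at hG0 hG1 ⊢
  obtain ⟨K, hK0, hK1, hK⟩ := ((eventually_convexComparable_GP_add hf0 hG0).and
    ((eventually_convexComparable_GP_add hf1 hG1).and (eventually_ge_atTop 1))).exists
  refine ⟨K, one_pos.trans_le hK, fun N t ht α hα => ?_⟩
  have hcomp : ConvexComparable (Icc 0 1) K GP ((1 - t) • (GP + f0) + t • (GP + f1)) :=
    convex_setOf_convexComparable _ _ _ hK0 hK1 (sub_nonneg.2 ht.2) ht.1 (sub_add_cancel 1 t)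
  have hcont : ∀ f, ContDiff ℝ 2 f → Continuous (GP + f) := fun f hf =>
    continuous_GP.add hf.continuous
  have hdiff : ∀ f, ContDiff ℝ 2 f → DifferentiableOn ℝ (GP + f) (Ioo 0 1) := fun f hf =>
    (contDiffOn_GP.add hf.contDiffOn).differentiableOn two_ne_zero
  exact one_div_le_Qnorm_div_and_le
    (((hcont f0 hf0).const_smul (1 - t)).add ((hcont f1 hf1).const_smul t)).measurable
    (((hdiff f0 hf0).const_smul (1 - t)).add ((hdiff f1 hf1).const_smul t)) hK hcomp N hα

theorem bergman_cp1_uniform_bounds_on_q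
    (f0 f1 : ℝ → ℝ) (hf0 : ContDiff ℝ (⊤ : ℕ∞) f0) (hf1 : ContDiff ℝ (⊤ : ℕ∞) f1)
    (hG0 : ∀ x ∈ Set.Ioo (0:ℝ) 1, 0 < iteratedDeriv 2 (Gt f0 f1 0) x)
    (hG1 : ∀ x ∈ Set.Ioo (0:ℝ) 1, 0 < iteratedDeriv 2 (Gt f0 f1 1) x) :
    ∃ C : ℝ, 0 < C ∧
      ∀ N : ℕ, 1 ≤ N → ∀ t ∈ Set.Icc (0:ℝ) 1, ∀ α ∈ Set.Icc (0:ℝ) 1,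
        1 / C ≤ Qnorm (Gt f0 f1 t) N α / Qnorm GP N α ∧
        Qnorm (Gt f0 f1 t) N α / Qnorm GP N α ≤ C := by
  obtain ⟨C, hC, hbound⟩ := bergman_cp1_uniform_bounds_on_q_general f0 f1
    (contDiff_infty.1 hf0 2) (contDiff_infty.1 hf1 2) hG0 hG1
  exact ⟨C, hC, fun N _ => hbound N⟩
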